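/- arXiv:2004.11635 — 2 statements merged into one kernel-verified Lean document; each statement's English description precedes it below -/
import Mathlib

section
/- Let L/K be an isometric extension of non-Archimedean fields, V a K-vector space of finite dimension d, and N, N' two non-Archimedean norms on V with ground field extensions N_L, N'_L on V_L = L ⊗_K V. Then the relative volume is invariant under ground field extension: vol(N_L, N'_L) = vol(N, N'), where the left-hand side is computed over L-subspaces of V_L and the right-hand side over K-subspaces of V. -/
open scoped BigOperators

/-- A non-Archimedean norm on a `K`-vector space `V`. -/
def IsNAnorm (K : Type*) {V : Type*} [NormedField K] [AddCommGroup V] [Module K V]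
    (N : V → ℝ) : Prop :=
  (∀ v, 0 ≤ N v) ∧ (∀ v, N v = 0 ↔ v = 0) ∧
  (∀ (a : K) (v : V), N (a • v) = ‖a‖ * N v) ∧
  (∀ v w : V, N (v + w) ≤ max (N v) (N w))

/-- The sup-distance `d_∞` between two norms on `V`. -/
noncomputable def dInfty {V : Type*} [AddCommGroup V] (N N' : V → ℝ) : ℝ :=
  sSup {r | ∃ v : V, v ≠ 0 ∧ r = |Real.log (N' v) - Real.log (N v)|}

/-- The `i`-th relative spectral value `λᵢ(N, N')`:
the supremum, over subspaces `W ⊆ V` with `dim W ≥ i`, of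
`inf_{w ∈ W ∖ {0}} (log N'(w) − log N(w))`. -/
noncomputable def specVal (K : Type*) {V : Type*} [Field K] [AddCommGroup V] [Module K V]
    (N N' : V → ℝ) (i : ℕ) : ℝ :=
  sSup {r | ∃ W : Submodule K V, i ≤ Module.finrank K W ∧
    r = sInf {s | ∃ w ∈ W, w ≠ (0 : V) ∧ s = Real.log (N' w) - Real.log (N w)}}

/-- The relative volume `vol(N, N') = (1/d)·Σ_{i=1}^d λᵢ(N, N')`, where `d = dim V`. -/
noncomputable def relVol (K : Type*) (V : Type*) [Field K] [AddCommGroup V] [Module K V]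
    (N N' : V → ℝ) : ℝ :=
  (Module.finrank K V : ℝ)⁻¹ *
    ∑ i ∈ Finset.range (Module.finrank K V), specVal K N N' (i + 1)

open scoped TensorProduct

/-- The ground field extension of a norm `N` on `V` to `V_L = L ⊗_K V`. -/
noncomputable def groundFieldExt (K : Type*) {L V : Type*} [NormedField K] [NormedField L]
    [Algebra K L] [AddCommGroup V] [Module K V] (N : V → ℝ) (w : L ⊗[K] V) : ℝ :=
  sInf {r | ∃ (n : ℕ) (a : Fin (n + 1) → L) (v : Fin (n + 1) → V),
    w = ∑ j, a j ⊗ₜ[K] v j ∧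
    r = Finset.univ.sup' Finset.univ_nonempty fun j => ‖a j‖ * N (v j)}

namespace RelVolAux

section basic
variable {K V : Type*} [NormedField K] [AddCommGroup V] [Module K V] {N : V → ℝ}

lemma na_neg (hN : IsNAnorm K N) (v : V) : N (-v) = N v := by
  have := hN.2.2.1 (-1) v
  simpa using this

lemma na_pos (hN : IsNAnorm K N) {v : V} (hv : v ≠ 0) : 0 < N v :=
  lt_of_le_of_ne (hN.1 v) (fun h => hv ((hN.2.1 v).1 h.symm))

lemma na_sub (hN : IsNAnorm K N) (v w : V) : N (v - w) ≤ max (N v) (N w) := by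
  have := hN.2.2.2 v (-w)
  rwa [na_neg hN, ← sub_eq_add_neg] at this

lemma na_sum (hN : IsNAnorm K N) {ι : Type*} (t : Finset ι) (f : ι → V) (s : ℝ) (hs : 0 ≤ s)
    (h : ∀ i ∈ t, N (f i) ≤ s) : N (∑ i ∈ t, f i) ≤ s := by
  classical
  induction t using Finset.induction_on with
  | empty => simpa [(hN.2.1 0).2 rfl] using hs
  | insert i t hi ih =>
    rw [Finset.sum_insert hi]
    refine (hN.2.2.2 _ _).trans (max_le (h i (by simp)) (ih fun j hj => h j (by simp [hj])))

lemma na_sum' (hN : IsNAnorm K N) {n : ℕ} (e : Fin n → V) (a : Fin n → K) (s : ℝ) (hs : 0 ≤ s)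
    (h : ∀ i, ‖a i‖ * N (e i) ≤ s) : N (∑ i, a i • e i) ≤ s :=
  na_sum hN _ _ s hs fun i _ => by rw [hN.2.2.1]; exact h i

/-- The family `e` is `C`-orthogonal for `N`. -/
def Orth (K : Type*) {V : Type*} [NormedField K] [AddCommGroup V] [Module K V] (N : V → ℝ)
    {n : ℕ} (e : Fin n → V) (C : ℝ) : Prop :=
  ∀ (a : Fin n → K) (j : Fin n), ‖a j‖ * N (e j) ≤ C * N (∑ i, a i • e i)

lemma exists_root (C : ℝ) (hC : 1 < C) : ∃ η : ℝ, 1 < η ∧ η ^ 4 ≤ C := by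
  refine ⟨C ^ ((1:ℝ)/4), Real.one_lt_rpow hC (by norm_num), ?_⟩
  rw [← Real.rpow_natCast, ← Real.rpow_mul (by linarith)]
  norm_num

lemma orth_li (hN : IsNAnorm K N) {n : ℕ} {e : Fin n → V} {C : ℝ} (he : ∀ j, e j ≠ 0)
    (ho : Orth K N e C) : LinearIndependent K e := by
  rw [Fintype.linearIndependent_iff]
  intro a ha j
  have h := ho a j
  rw [ha, (hN.2.1 0).2 rfl, mul_zero] at h
  have hp := na_pos hN (he j)
  have : ‖a j‖ ≤ 0 := by
    by_contra hc
    push Not at hc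
    have := mul_pos hc hp
    linarith
  simpa using this

lemma closed_span [CompleteSpace K] (hN : IsNAnorm K N) {n : ℕ} {e : Fin n → V} {C : ℝ}
    (hC : 0 < C) (he : ∀ j, e j ≠ 0) (ho : Orth K N e C) (x : V)
    (hx : x ∉ Submodule.span K (Set.range e)) :
    ∃ ε > 0, ∀ w ∈ Submodule.span K (Set.range e), ε ≤ N (x - w) := by
  by_contra hcon
  push Not at hcon
  have h1 : ∀ m : ℕ, ∃ a : Fin n → K, N (x - ∑ i, a i • e i) < 1 / ((m:ℝ) + 1) := by
    intro m
    obtain ⟨w, hw, hlt⟩ := hcon (1 / ((m:ℝ) + 1)) (by positivity)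
    obtain ⟨a, rfl⟩ := (Submodule.mem_span_range_iff_exists_fun K).1 hw
    exact ⟨a, hlt⟩
  choose a ha using h1
  have hc : ∀ i, CauchySeq fun m => a m i := by
    intro i
    rw [Metric.cauchySeq_iff']
    intro ε hε
    have hp := na_pos hN (he i)
    obtain ⟨M, hM⟩ := exists_nat_one_div_lt (show 0 < ε * N (e i) / C by positivity)
    refine ⟨M, fun m hm => ?_⟩
    have h2 := ho (a m - a M) i
    have h3 : ∑ i, (a m - a M) i • e i = (x - ∑ i, a M i • e i) - (x - ∑ i, a m i • e i) := by
      simp [sub_smul, Finset.sum_sub_distrib]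
    rw [h3] at h2
    have h4 := na_sub hN (x - ∑ i, a M i • e i) (x - ∑ i, a m i • e i)
    have h5 : (1:ℝ) / ((m:ℝ) + 1) ≤ 1 / ((M:ℝ) + 1) := by
      have : (M:ℝ) ≤ m := by exact_mod_cast hm
      gcongr
    have h6 : N ((x - ∑ i, a M i • e i) - (x - ∑ i, a m i • e i)) < ε * N (e i) / C :=
      lt_of_le_of_lt h4 (max_lt ((ha M).trans hM) (((ha m).trans_le h5).trans hM))
    rw [lt_div_iff₀ hC] at h6
    rw [dist_eq_norm]
    have : ‖a m i - a M i‖ * N (e i) < ε * N (e i) := by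
      have h7 : ‖a m i - a M i‖ * N (e i) ≤ _ := h2
      linarith
    exact lt_of_mul_lt_mul_right this hp.le
  choose l hl using fun i => cauchySeq_tendsto_of_complete (hc i)
  have hzero : N (x - ∑ i, l i • e i) ≤ 0 := by
    refine le_of_forall_pos_le_add fun ε hε => ?_
    rw [zero_add]
    have e1 : ∀ᶠ m : ℕ in Filter.atTop, ∀ i, ‖a m i - l i‖ * N (e i) ≤ ε := by
      rw [Filter.eventually_all]
      intro i
      have : Filter.Tendsto (fun m => ‖a m i - l i‖ * N (e i)) Filter.atTop (nhds 0) := by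
        have := (tendsto_iff_norm_sub_tendsto_zero.1 (hl i)).mul_const (N (e i))
        simpa using this
      exact this.eventually_le_const hε
    have e2 : ∀ᶠ m : ℕ in Filter.atTop, 1 / ((m:ℝ) + 1) < ε :=
      tendsto_one_div_add_atTop_nhds_zero_nat.eventually_lt_const hε
    obtain ⟨m, hm1, hm2⟩ := (e1.and e2).exists
    have h3 : x - ∑ i, l i • e i = (x - ∑ i, a m i • e i) + ∑ i, (a m i - l i) • e i := by
      simp [sub_smul, Finset.sum_sub_distrib]
    rw [h3]
    exact (hN.2.2.2 _ _).trans (max_le ((ha m).trans hm2).le (na_sum' hN _ _ _ hε.le hm1))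
  have h0 : x - ∑ i, l i • e i = 0 := (hN.2.1 _).1 (le_antisymm hzero (hN.1 _))
  apply hx
  rw [sub_eq_zero.1 h0]
  exact (Submodule.mem_span_range_iff_exists_fun K).2 ⟨l, rfl⟩

/-- Given an orthogonal family whose span misses `x`, extend. -/
lemma extend_orth [CompleteSpace K] (hN : IsNAnorm K N) {n : ℕ} {e : Fin n → V} {η : ℝ}
    (hη : 1 < η) (he : ∀ j, e j ≠ 0) (ho : Orth K N e η) (x : V)
    (hx : x ∉ Submodule.span K (Set.range e)) :
    ∃ y ≠ 0, Orth K N (Fin.snoc e y : Fin (n + 1) → V) (η ^ 2) := by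
  obtain ⟨ε, hε, hεw⟩ := closed_span hN (by linarith) he ho x hx
  set W := Submodule.span K (Set.range e) with hW
  let S : Set ℝ := (fun w => N (x - w)) '' (W : Set V)
  have hbdd : BddBelow S := ⟨ε, by rintro _ ⟨w, hw, rfl⟩; exact hεw w hw⟩
  have hne : S.Nonempty := ⟨_, 0, W.zero_mem, rfl⟩
  have hpos : 0 < sInf S :=
    lt_of_lt_of_le hε (le_csInf hne (by rintro _ ⟨w, hw, rfl⟩; exact hεw w hw))
  obtain ⟨_, ⟨w0, hw0, rfl⟩, hlt⟩ := exists_lt_of_csInf_lt hne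
    (show sInf S < η * sInf S by nlinarith)
  simp only at hlt
  have hy : ∀ w ∈ W, N (x - w0) ≤ η * N (x - w0 + w) := by
    intro w hw
    have : sInf S ≤ N (x - w0 + w) := csInf_le hbdd ⟨w0 - w, W.sub_mem hw0 hw, by
      simp only; congr 1; abel⟩
    nlinarith
  have hy0 : x - w0 ≠ 0 := by
    intro h
    rw [sub_eq_zero] at h
    exact hx (h ▸ hw0)
  refine ⟨x - w0, hy0, ?_⟩
  have key : ∀ (c : K), ∀ w ∈ W, ‖c‖ * N (x - w0) ≤ η * N (w + c • (x - w0)) := by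
    intro c w hw
    by_cases hc : c = 0
    · subst hc
      simp only [norm_zero, zero_mul, zero_smul, add_zero]
      exact mul_nonneg (by linarith) (hN.1 _)
    · have h1 := hy (c⁻¹ • w) (W.smul_mem _ hw)
      have h2 : w + c • (x - w0) = c • (x - w0 + c⁻¹ • w) := by
        rw [smul_add, smul_smul, mul_inv_cancel₀ hc, one_smul, add_comm]
      rw [h2, hN.2.2.1]
      have := mul_le_mul_of_nonneg_left h1 (norm_nonneg c)
      linarith
  intro a
  rw [Fin.sum_univ_castSucc]
  simp only [Fin.snoc_castSucc, Fin.snoc_last]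
  set w := ∑ i : Fin n, a i.castSucc • e i with hw
  have hwW : w ∈ W := (Submodule.mem_span_range_iff_exists_fun K).2 ⟨_, rfl⟩
  have k1 := key (a (Fin.last n)) w hwW
  set z := w + a (Fin.last n) • (x - w0) with hz
  have hz0 := hN.1 z
  have k2 : N w ≤ η * N z := by
    have : w = z - a (Fin.last n) • (x - w0) := by simp [hz]
    rw [this]
    refine (na_sub hN _ _).trans (max_le (by nlinarith) ?_)
    rw [hN.2.2.1]; exact k1
  intro j
  refine Fin.lastCases ?_ (fun j => ?_) j
  · simp only [Fin.snoc_last]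
    nlinarith [mul_nonneg (show 0 ≤ η by linarith) hz0]
  · simp only [Fin.snoc_castSucc]
    have := ho (fun i => a i.castSucc) j
    have h3 : ‖a j.castSucc‖ * N (e j) ≤ η * N w := this
    nlinarith

lemma exists_orth [CompleteSpace K] [FiniteDimensional K V] (hN : IsNAnorm K N) (v : V)
    (hv : v ≠ 0) (k : ℕ) (hk : k + 1 ≤ Module.finrank K V) : ∀ C : ℝ, 1 < C →
    ∃ e : Fin (k + 1) → V, e 0 = v ∧ (∀ j, e j ≠ 0) ∧ Orth K N e C := by
  induction k with
  | zero =>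
    intro C hC
    refine ⟨fun _ => v, rfl, fun _ => hv, fun a j => ?_⟩
    have : j = 0 := Subsingleton.elim (α := Fin 1) _ _
    subst this
    simp only [Nat.reduceAdd, Finset.univ_unique, Fin.default_eq_zero,
      Finset.sum_singleton]
    rw [hN.2.2.1]
    nlinarith [mul_nonneg (norm_nonneg (a 0)) (hN.1 v)]
  | succ k ih =>
    intro C hC
    obtain ⟨η, hη, hηC⟩ := exists_root C hC
    obtain ⟨e, he0, he, ho⟩ := ih (by omega) η hη
    have hlt : Submodule.span K (Set.range e) ≠ ⊤ := by
      intro h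
      have h1 := finrank_range_le_card (R := K) e
      rw [Set.finrank, h, finrank_top, Fintype.card_fin] at h1
      omega
    obtain ⟨x, hx⟩ : ∃ x, x ∉ Submodule.span K (Set.range e) := by
      by_contra hcon
      push Not at hcon
      exact hlt (Submodule.eq_top_iff'.2 hcon)
    obtain ⟨y, hy0, hy⟩ := extend_orth hN hη he ho x hx
    refine ⟨Fin.snoc e y, ?_, ?_, ?_⟩
    · have : (0 : Fin (k + 1 + 1)) = Fin.castSucc 0 := rfl
      rw [this, Fin.snoc_castSucc, he0]
    · intro j
      refine Fin.lastCases ?_ (fun j => ?_) j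
      · simpa using hy0
      · simpa using he j
    · intro a j
      refine (hy a j).trans ?_
      have := hN.1 (∑ i, a i • (Fin.snoc e y : Fin (k + 1 + 1) → V) i)
      have : η ^ 2 ≤ C := by nlinarith [sq_nonneg (η^2), one_lt_pow₀ hη (two_ne_zero)]
      gcongr

lemma exists_functional [CompleteSpace K] [FiniteDimensional K V] (hN : IsNAnorm K N) (v : V)
    (hv : v ≠ 0) (C : ℝ) (hC : 1 < C) :
    ∃ f : V →ₗ[K] K, f v = 1 ∧ ∀ w, ‖f w‖ * N v ≤ C * N w := by
  have hd : 0 < Module.finrank K V := Module.finrank_pos_iff_exists_ne_zero.2 ⟨v, hv⟩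
  obtain ⟨k, hk⟩ := Nat.exists_eq_succ_of_ne_zero hd.ne'
  obtain ⟨e, he0, he, ho⟩ := exists_orth hN v hv k hk.ge C hC
  let b := basisOfLinearIndependentOfCardEqFinrank (orth_li hN he ho) (by simp [hk])
  have hb : ∀ i, b i = e i := fun i => by simp [b]
  refine ⟨b.coord 0, ?_, fun w => ?_⟩
  · rw [← he0, ← hb]; simp
  · have h := ho (fun i => b.repr w i) 0
    have h2 : ∑ i, b.repr w i • e i = w := by
      conv_rhs => rw [← b.sum_repr w]
      simp [hb]
    rw [h2, he0] at h
    simpa using h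

lemma exists_bound [CompleteSpace K] [FiniteDimensional K V] {N' : V → ℝ} (hN : IsNAnorm K N)
    (hN' : IsNAnorm K N') : ∃ B : ℝ, ∀ w, N' w ≤ B * N w := by
  by_cases hd : ∃ v : V, v ≠ 0
  · obtain ⟨v, hv⟩ := hd
    have hd : 0 < Module.finrank K V := Module.finrank_pos_iff_exists_ne_zero.2 ⟨v, hv⟩
    obtain ⟨k, hk⟩ := Nat.exists_eq_succ_of_ne_zero hd.ne'
    obtain ⟨e, he0, he, ho⟩ := exists_orth hN v hv k hk.ge 2 (by norm_num)
    let b := basisOfLinearIndependentOfCardEqFinrank (orth_li hN he ho) (by simp [hk])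
    have hb : ∀ i, b i = e i := fun i => by simp [b]
    have hnn : ∀ i, 0 ≤ N' (e i) / N (e i) := fun i => div_nonneg (hN'.1 _) (hN.1 _)
    refine ⟨(∑ i, N' (e i) / N (e i)) * 2, fun w => ?_⟩
    have h2 : ∑ i, b.repr w i • e i = w := by
      conv_rhs => rw [← b.sum_repr w]
      simp [hb]
    have hS : 0 ≤ ∑ i, N' (e i) / N (e i) := Finset.sum_nonneg fun i _ => hnn i
    have hw := hN.1 w
    have := na_sum' hN' e (fun i => b.repr w i) ((∑ i, N' (e i) / N (e i)) * 2 * N w)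
      (by positivity) (fun i => ?_)
    · rwa [h2] at this
    · have h := ho (fun i => b.repr w i) i
      rw [h2] at h
      have hp := na_pos hN (he i)
      have h3 : N' (e i) / N (e i) ≤ ∑ i, N' (e i) / N (e i) :=
        Finset.single_le_sum (f := fun i => N' (e i) / N (e i)) (fun i _ => hnn i)
          (Finset.mem_univ i)
      calc ‖b.repr w i‖ * N' (e i) = (N' (e i) / N (e i)) * (‖b.repr w i‖ * N (e i)) := by
            field_simp
        _ ≤ (∑ i, N' (e i) / N (e i)) * (2 * N w) := by gcongr
        _ = _ := by ring
  · push Not at hd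
    refine ⟨1, fun w => ?_⟩
    rw [hd w, (hN.2.1 0).2 rfl, (hN'.2.1 0).2 rfl]; simp

lemma exists_max [CompleteSpace K] [FiniteDimensional K V] {N' : V → ℝ} (hN : IsNAnorm K N)
    (hN' : IsNAnorm K N') (hne : ∃ v : V, v ≠ 0) (η : ℝ) (hη : 1 < η) :
    ∃ v : V, v ≠ 0 ∧ ∀ w, N' w * N v ≤ η * N' v * N w := by
  obtain ⟨B, hB⟩ := exists_bound hN hN'
  let S : Set ℝ := (fun w => N' w / N w) '' {w : V | w ≠ 0}
  have hbdd : BddAbove S := ⟨B, by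
    rintro _ ⟨w, hw, rfl⟩
    exact (div_le_iff₀ (na_pos hN hw)).2 (hB w)⟩
  have hSne : S.Nonempty := by
    obtain ⟨v, hv⟩ := hne
    exact ⟨_, v, hv, rfl⟩
  have hpos : 0 < sSup S := by
    obtain ⟨v, hv⟩ := hne
    exact lt_of_lt_of_le (div_pos (na_pos hN' hv) (na_pos hN hv)) (le_csSup hbdd ⟨v, hv, rfl⟩)
  obtain ⟨_, ⟨v, hv, rfl⟩, hlt⟩ := exists_lt_of_lt_csSup hSne
    (show sSup S / η < sSup S from div_lt_self hpos hη)
  refine ⟨v, hv, fun w => ?_⟩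
  by_cases hw : w = 0
  · rw [hw, (hN.2.1 0).2 rfl, (hN'.2.1 0).2 rfl]; simp
  have h1 : N' w / N w ≤ sSup S := le_csSup hbdd ⟨w, hw, rfl⟩
  simp only at hlt
  have hp := na_pos hN hw
  have hpv := na_pos hN hv
  rw [div_lt_iff₀ (by linarith)] at hlt
  have h2 : N' w / N w ≤ N' v / N v * η := h1.trans hlt.le
  rw [div_mul_eq_mul_div, div_le_div_iff₀ hp hpv] at h2
  linarith

lemma cons_orth (hN : IsNAnorm K N) {n : ℕ} (f : V →ₗ[K] K) (v : V) (hfv : f v = 1) (η C : ℝ)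
    (hη : 1 < η) (hηC : η ^ 4 ≤ C) (hf : ∀ w, ‖f w‖ * N v ≤ η ^ 2 * N w)
    (e : Fin n → LinearMap.ker f) (ho : Orth K (fun w : LinearMap.ker f => N w) e η) :
    Orth K N (Fin.cons v (fun i => (e i : V)) : Fin (n + 1) → V) C := by
  intro a
  rw [Fin.sum_univ_succ]
  simp only [Fin.cons_zero, Fin.cons_succ]
  have hsum : ((∑ i : Fin n, a i.succ • e i : LinearMap.ker f) : V)
      = ∑ i : Fin n, a i.succ • (e i : V) := by simp
  rw [← hsum]
  have ho' := ho (fun i => a i.succ)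
  set u : LinearMap.ker f := ∑ i : Fin n, a i.succ • e i with hu
  set z := a 0 • v + (u : V) with hz
  have hfz : f z = a 0 := by
    have : f (u : V) = 0 := u.2
    simp [hz, this, hfv]
  have h0 := hf z
  rw [hfz] at h0
  have hz0 := hN.1 z
  have hη2 : 1 < η ^ 2 := one_lt_pow₀ hη two_ne_zero
  have h1 : N u ≤ η ^ 2 * N z := by
    have : (u : V) = z - a 0 • v := by simp [hz]
    rw [this]
    refine (na_sub hN _ _).trans (max_le (by nlinarith) ?_)
    rw [hN.2.2.1]; exact h0
  intro j
  refine Fin.cases ?_ (fun j => ?_) j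
  · simp only [Fin.cons_zero]
    refine h0.trans ?_
    gcongr
    nlinarith
  · simp only [Fin.cons_succ]
    refine (ho' j).trans ?_
    calc η * N u ≤ η * (η ^ 2 * N z) := by gcongr
      _ = η ^ 3 * N z := by ring
      _ ≤ C * N z := by
        gcongr
        exact (pow_le_pow_right₀ hη.le (by norm_num)).trans hηC

end basic

universe u v

lemma exists_joint {K : Type u} [NormedField K] [CompleteSpace K] (n : ℕ) :
    ∀ (V : Type v) [AddCommGroup V] [Module K V] [FiniteDimensional K V]
    (_ : Module.finrank K V = n)
    (N N' : V → ℝ) (_ : IsNAnorm K N) (_ : IsNAnorm K N') (C : ℝ) (_ : 1 < C),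
    ∃ e : Fin n → V, (∀ j, e j ≠ 0) ∧ Orth K N e C ∧ Orth K N' e C := by
  induction n with
  | zero =>
    intro V _ _ _ _ N N' _ _ C _
    exact ⟨Fin.elim0, fun j => j.elim0, fun a j => j.elim0, fun a j => j.elim0⟩
  | succ n ih =>
    intro V _ _ _ hd N N' hN hN' C hC
    obtain ⟨η, hη, hηC⟩ := exists_root C hC
    have hne : ∃ v : V, v ≠ 0 := 
      (Module.finrank_pos_iff_exists_ne_zero (R := K)).1 (by omega)
    obtain ⟨v, hv, hmax⟩ := exists_max hN hN' hne η hη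
    obtain ⟨f, hfv, hf⟩ := exists_functional hN' v hv η hη
    have hp := na_pos hN hv
    have hp' := na_pos hN' hv
    have hη2 : η ≤ η ^ 2 := by nlinarith
    have hf' : ∀ w, ‖f w‖ * N' v ≤ η ^ 2 * N' w := fun w => (hf w).trans (by
      have := hN'.1 w
      gcongr)
    have hf2 : ∀ w, ‖f w‖ * N v ≤ η ^ 2 * N w := by
      intro w
      have h1 : ‖f w‖ * N v * N' v ≤ η ^ 2 * N w * N' v := by
        calc ‖f w‖ * N v * N' v = (‖f w‖ * N' v) * N v := by ring
          _ ≤ (η * N' w) * N v := mul_le_mul_of_nonneg_right (hf w) hp.le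
          _ = η * (N' w * N v) := by ring
          _ ≤ η * (η * N' v * N w) := mul_le_mul_of_nonneg_left (hmax w) (by linarith)
          _ = _ := by ring
      exact le_of_mul_le_mul_right h1 hp'
    have hker : Module.finrank K (LinearMap.ker f) = n := by
      have h1 := f.finrank_range_add_finrank_ker
      have h2 : LinearMap.range f = ⊤ := LinearMap.range_eq_top.2 fun c =>
        ⟨c • v, by simp [hfv]⟩
      rw [h2, finrank_top, Module.finrank_self] at h1
      omega
    have hres : ∀ M : V → ℝ, IsNAnorm K M → IsNAnorm K (fun w : LinearMap.ker f => M w) := by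
      intro M hM
      refine ⟨fun w => hM.1 w, fun w => ?_, fun a w => hM.2.2.1 a w, fun w w' => hM.2.2.2 w w'⟩
      simpa using hM.2.1 (w : V)
    obtain ⟨e, he, ho, ho'⟩ := ih (LinearMap.ker f) hker _ _ (hres N hN) (hres N' hN') η hη
    refine ⟨Fin.cons v (fun i => (e i : V)), ?_, cons_orth hN f v hfv η C hη hηC hf2 e ho,
      cons_orth hN' f v hfv η C hη hηC hf' e ho'⟩
    intro j
    refine Fin.cases ?_ (fun j => ?_) j
    · simpa using hv
    · simpa using he j

section spec
variable {F V : Type*} [NormedField F] [AddCommGroup V] [Module F V]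

lemma specVal_close {d : ℕ} (b : Module.Basis (Fin d) F V) (N N' : V → ℝ) (μ : Fin d → ℝ) (δ : ℝ)
    (hlow : ∀ i, ∀ w : V, w ≠ 0 → (∀ j, i < j → b.repr w j = 0) →
      μ i - δ ≤ Real.log (N' w) - Real.log (N w))
    (hup : ∀ i, ∀ w : V, w ≠ 0 → (∀ j, j < i → b.repr w j = 0) →
      Real.log (N' w) - Real.log (N w) ≤ μ i + δ) (i : Fin d) :
    |specVal F N N' (i + 1) - μ i| ≤ δ := by
  have hfd : FiniteDimensional F V := Module.Basis.finiteDimensional_of_finite b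
  have hrank : Module.finrank F V = d := by simpa using Module.finrank_eq_card_basis b
  have hd : 0 < d := i.pos
  let last : Fin d := ⟨d - 1, by omega⟩
  have hbelow : ∀ W : Submodule F V, BddBelow {s | ∃ w ∈ W, w ≠ (0 : V) ∧
      s = Real.log (N' w) - Real.log (N w)} := by
    intro W
    refine ⟨μ last - δ, ?_⟩
    rintro _ ⟨w, -, hw, rfl⟩
    refine hlow last w hw fun j hj => ?_
    exfalso
    have : d - 1 < (j : ℕ) := hj
    omega
  have hle : ∀ r ∈ {r | ∃ W : Submodule F V, (i : ℕ) + 1 ≤ Module.finrank F W ∧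
    r = sInf {s | ∃ w ∈ W, w ≠ (0 : V) ∧ s = Real.log (N' w) - Real.log (N w)}}, r ≤ μ i + δ := by
    rintro _ ⟨W, hW, rfl⟩
    -- the map sending w to its first i coordinates has a kernel on W
    let g : W →ₗ[F] (Fin (i : ℕ) → F) :=
      LinearMap.pi fun k => (b.coord ⟨k, k.2.trans i.2⟩).comp W.subtype
    have hg : ∃ w : W, w ≠ 0 ∧ g w = 0 := by
      have h1 : LinearMap.ker g ≠ ⊥ := LinearMap.ker_ne_bot_of_finrank_lt (by simp; omega)
      obtain ⟨w, hw, hw0⟩ := (Submodule.ne_bot_iff _).1 h1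
      exact ⟨w, hw0, hw⟩
    obtain ⟨w, hw0, hgw⟩ := hg
    have hw0' : (w : V) ≠ 0 := by simpa using hw0
    refine (csInf_le (hbelow W) ⟨w, w.2, hw0', rfl⟩).trans (hup i w hw0' fun j hj => ?_)
    exact congrFun hgw ⟨j, hj⟩
  have hge : ∃ r ∈ {r | ∃ W : Submodule F V, (i : ℕ) + 1 ≤ Module.finrank F W ∧
    r = sInf {s | ∃ w ∈ W, w ≠ (0 : V) ∧ s = Real.log (N' w) - Real.log (N w)}}, μ i - δ ≤ r := by
    let g : Fin ((i : ℕ) + 1) → V := fun k => b ⟨k, by omega⟩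
    have hli : LinearIndependent F g := b.linearIndependent.comp
      (fun k : Fin ((i : ℕ) + 1) => (⟨k, by omega⟩ : Fin d)) (by
        intro k l h
        simpa [Fin.ext_iff] using h)
    refine ⟨_, ⟨Submodule.span F (Set.range g), ?_, rfl⟩, ?_⟩
    · rw [finrank_span_eq_card hli]; simp
    · refine le_csInf ⟨_, b i, Submodule.subset_span ⟨⟨i, by omega⟩, rfl⟩, b.ne_zero i, rfl⟩ ?_
      rintro _ ⟨w, hw, hw0, rfl⟩
      refine hlow i w hw0 fun j hj => ?_
      have : Submodule.span F (Set.range g) ≤ LinearMap.ker (b.coord j) := by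
        rw [Submodule.span_le]
        rintro _ ⟨k, rfl⟩
        have hne : (⟨k, by omega⟩ : Fin d) ≠ j := by
          intro h
          have h1 : (k : ℕ) = j := congrArg Fin.val h
          have h2 : (i : ℕ) < j := hj
          omega
        simp [g, Finsupp.single_eq_of_ne' hne]
      exact this hw
  obtain ⟨r, hr, hr2⟩ := hge
  rw [abs_le]
  unfold specVal
  constructor
  · have := le_csSup ⟨μ i + δ, hle⟩ hr
    linarith
  · have := csSup_le ⟨r, hr⟩ hle
    linarith

/-- Diagonal up to a factor `C`. -/
def Diag {d : ℕ} (b : Module.Basis (Fin d) F V) (N : V → ℝ) (r : Fin d → ℝ) (C : ℝ) : Prop :=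
  (∀ w j, ‖b.repr w j‖ * r j ≤ C * N w) ∧
  (∀ w s, 0 ≤ s → (∀ j, ‖b.repr w j‖ * r j ≤ s) → N w ≤ s)

lemma diag_pos {d : ℕ} {b : Module.Basis (Fin d) F V} {N : V → ℝ} {r : Fin d → ℝ} {C : ℝ}
    (hC : 1 < C) (hr : ∀ j, 0 < r j) (h : Diag b N r C) (w : V) (hw : w ≠ 0) : 0 < N w := by
  obtain ⟨j, hj⟩ : ∃ j, b.repr w j ≠ 0 := by
    by_contra hcon
    push Not at hcon
    exact hw (b.repr.map_eq_zero_iff.1 (Finsupp.ext hcon))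
  have h1 := h.1 w j
  have h2 : 0 < ‖b.repr w j‖ * r j := mul_pos (norm_pos_iff.2 hj) (hr j)
  have h3 : 0 < C * N w := by linarith
  exact (pos_iff_pos_of_mul_pos h3).1 (by linarith)

/-- Comparison of two diagonal norms on the support of `w`. -/
lemma diag_cmp {d : ℕ} {b : Module.Basis (Fin d) F V} {N N' : V → ℝ} {r r' : Fin d → ℝ} {C : ℝ}
    (hC : 1 < C) (hr : ∀ j, 0 < r j) (hr' : ∀ j, 0 < r' j) (h : Diag b N r C)
    (h' : Diag b N' r' C) (w : V) (hw : w ≠ 0) (m : ℝ)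
    (hm : ∀ j, b.repr w j ≠ 0 → m ≤ Real.log (r' j) - Real.log (r j)) :
    m - Real.log C ≤ Real.log (N' w) - Real.log (N w) := by
  have hp := diag_pos hC hr h w hw
  have hp' := diag_pos hC hr' h' w hw
  have h1 : N w ≤ Real.exp (-m) * (C * N' w) := by
    refine h.2 w _ (by positivity) fun j => ?_
    by_cases hj : b.repr w j = 0
    · rw [hj, norm_zero, zero_mul]; positivity
    · have h2 : r j ≤ Real.exp (-m) * r' j := by
        rw [← Real.log_le_log_iff (hr j) (mul_pos (Real.exp_pos _) (hr' j)),
          Real.log_mul (Real.exp_pos _).ne' (hr' j).ne', Real.log_exp]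
        linarith [hm j hj]
      calc ‖b.repr w j‖ * r j ≤ ‖b.repr w j‖ * (Real.exp (-m) * r' j) := by gcongr
        _ = Real.exp (-m) * (‖b.repr w j‖ * r' j) := by ring
        _ ≤ _ := mul_le_mul_of_nonneg_left (h'.1 w j) (Real.exp_pos _).le
  have h2 := Real.log_le_log hp h1
  rw [Real.log_mul (Real.exp_pos _).ne' (by positivity), Real.log_exp,
    Real.log_mul (by positivity) hp'.ne'] at h2
  linarith

lemma specVal_diag {d : ℕ} {b : Module.Basis (Fin d) F V} {N N' : V → ℝ} {r r' : Fin d → ℝ} {C : ℝ}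
    (hC : 1 < C) (hr : ∀ j, 0 < r j) (hr' : ∀ j, 0 < r' j) (h : Diag b N r C)
    (h' : Diag b N' r' C) (hmono : Antitone fun j => Real.log (r' j) - Real.log (r j))
    (i : Fin d) :
    |specVal F N N' (i + 1) - (Real.log (r' i) - Real.log (r i))| ≤ Real.log C := by
  refine specVal_close b N N' (fun j => Real.log (r' j) - Real.log (r j)) _ ?_ ?_ i
  · intro i w hw hj
    refine diag_cmp hC hr hr' h h' w hw _ fun j hj' => hmono ?_
    by_contra hc
    exact hj' (hj j (not_le.1 hc))
  · intro i w hw hj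
    have := diag_cmp hC hr' hr h' h w hw (Real.log (r i) - Real.log (r' i)) fun j hj' => by
      have hij : i ≤ j := by
        by_contra hc
        exact hj' (hj j (not_le.1 hc))
      have := hmono hij
      simp only at this
      linarith
    linarith

end spec

open scoped TensorProduct

section ext
variable {K L V : Type*} [NormedField K] [NormedField L] [IsUltrametricDist L] [Algebra K L]
    [AddCommGroup V] [Module K V]

lemma diag_base {N : V → ℝ} (hN : IsNAnorm K N) {d : ℕ} {b : Module.Basis (Fin d) K V} {C : ℝ}
    (ho : Orth K N b C) : Diag b N (fun j => N (b j)) C := by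
  constructor
  · intro w j
    have := ho (fun i => b.repr w i) j
    rwa [b.sum_repr] at this
  · intro w s hs h
    have := na_sum' hN b (fun i => b.repr w i) s hs h
    rwa [b.sum_repr] at this

lemma diag_ext (hisom : ∀ x : K, ‖algebraMap K L x‖ = ‖x‖) {N : V → ℝ} (hN : IsNAnorm K N) {d : ℕ}
    (hd : 0 < d) {b : Module.Basis (Fin d) K V} {C : ℝ} (hC : 1 < C)
    (ho : Orth K N b C) :
    Diag (b.baseChange L) (groundFieldExt K N : L ⊗[K] V → ℝ) (fun j => N (b j)) C := by
  have hb := diag_base hN ho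
  constructor
  · intro w j
    rw [mul_comm C, ← div_le_iff₀ (by linarith)]
    refine le_csInf ?_ ?_
    · obtain ⟨k, rfl⟩ := Nat.exists_eq_succ_of_ne_zero hd.ne'
      refine ⟨_, k, fun j => (b.baseChange L).repr w j, fun j => b j, ?_, rfl⟩
      conv_lhs => rw [← (b.baseChange L).sum_repr w]
      refine Finset.sum_congr rfl fun i _ => ?_
      rw [Module.Basis.baseChange_apply, TensorProduct.smul_tmul', smul_eq_mul, mul_one]
    · rintro _ ⟨n, a, v, rfl, rfl⟩
      rw [div_le_iff₀ (by linarith)]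
      set M := Finset.univ.sup' Finset.univ_nonempty fun j => ‖a j‖ * N (v j) with hM
      have hMj : ∀ k, ‖a k‖ * N (v k) ≤ M := fun k =>
        Finset.le_sup' (fun j => ‖a j‖ * N (v j)) (Finset.mem_univ k)
      rw [map_sum, Finsupp.finsetSum_apply]
      obtain ⟨k, -, hk⟩ := IsUltrametricDist.exists_norm_finsetSum_le_of_nonempty
        (Finset.univ_nonempty) (fun k => ((b.baseChange L).repr (a k ⊗ₜ[K] v k)) j)
      refine (mul_le_mul_of_nonneg_right hk (hN.1 _)).trans ?_
      rw [Module.Basis.baseChange_repr_tmul, Algebra.smul_def, norm_mul, hisom]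
      have h1 := hb.1 (v k) j
      simp only at h1
      calc ‖b.repr (v k) j‖ * ‖a k‖ * N (b j) = ‖a k‖ * (‖b.repr (v k) j‖ * N (b j)) := by ring
        _ ≤ ‖a k‖ * (C * N (v k)) := by gcongr
        _ = (‖a k‖ * N (v k)) * C := by ring
        _ ≤ M * C := by gcongr; exact hMj k
  · intro w s hs h
    obtain ⟨k, rfl⟩ := Nat.exists_eq_succ_of_ne_zero hd.ne'
    refine le_trans (b := Finset.univ.sup' Finset.univ_nonempty
      fun j => ‖(b.baseChange L).repr w j‖ * N (b j)) ?_ (Finset.sup'_le _ _ fun j _ => h j)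
    refine csInf_le ⟨0, ?_⟩ ⟨k, fun j => (b.baseChange L).repr w j, fun j => b j, ?_, rfl⟩
    · rintro _ ⟨n, a, v, -, rfl⟩
      exact (mul_nonneg (norm_nonneg (a 0)) (hN.1 (v 0))).trans
        (Finset.le_sup' (fun j => ‖a j‖ * N (v j)) (Finset.mem_univ 0))
    · conv_lhs => rw [← (b.baseChange L).sum_repr w]
      refine Finset.sum_congr rfl fun i _ => ?_
      rw [Module.Basis.baseChange_apply, TensorProduct.smul_tmul', smul_eq_mul, mul_one]

end ext

lemma exists_joint_sorted {K V : Type*} [NormedField K] [CompleteSpace K] [AddCommGroup V]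
    [Module K V] [FiniteDimensional K V] {N N' : V → ℝ} (hN : IsNAnorm K N) (hN' : IsNAnorm K N')
    (C : ℝ) (hC : 1 < C) : ∃ b : Module.Basis (Fin (Module.finrank K V)) K V,
      Orth K N b C ∧ Orth K N' b C ∧
      Antitone fun j => Real.log (N' (b j)) - Real.log (N (b j)) := by
  obtain ⟨e, he, ho, ho'⟩ := exists_joint (K := K) _ V rfl N N' hN hN' C hC
  let b := Module.Basis.mk (orth_li hN he ho)
    ((orth_li hN he ho).span_eq_top_of_card_eq_finrank' (by simp)).ge
  have hb : ∀ i, b i = e i := fun i => by simp [b]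
  let g : Fin (Module.finrank K V) → ℝ := fun j => Real.log (N (e j)) - Real.log (N' (e j))
  let σ := Tuple.sort g
  have hσ : Monotone (g ∘ σ) := Tuple.monotone_sort g
  have hperm : ∀ M : V → ℝ, Orth K M e C → Orth K M (b.reindex σ.symm) C := by
    intro M hM a j
    have h1 := hM (fun i => a (σ.symm i)) (σ j)
    have h2 : ∑ i, a i • (b.reindex σ.symm) i = ∑ i, a (σ.symm i) • e i := by
      rw [← Equiv.sum_comp σ (fun i => a (σ.symm i) • e i)]
      simp [hb]
    rw [h2]
    simpa [hb] using h1
  refine ⟨b.reindex σ.symm, hperm N ho, hperm N' ho', ?_⟩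
  intro i j hij
  have := hσ hij
  simp only [Function.comp, g] at this
  simp only [Module.Basis.reindex_apply, Equiv.symm_symm, hb]
  linarith

end RelVolAux

/-- The relative volume is invariant under ground field extension:
`vol(N_L, N'_L) = vol(N, N')`. -/
theorem relVol_groundFieldExt
    (K L V : Type*) [NormedField K] [IsUltrametricDist K] [CompleteSpace K]
    [NormedField L] [IsUltrametricDist L] [CompleteSpace L] [Algebra K L]
    (hisom : ∀ x : K, ‖algebraMap K L x‖ = ‖x‖)
    [AddCommGroup V] [Module K V] [FiniteDimensional K V]
    (N N' : V → ℝ) (hN : IsNAnorm K N) (hN' : IsNAnorm K N') :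
    relVol L (L ⊗[K] V) (groundFieldExt K N) (groundFieldExt K N') = relVol K V N N' := by
  unfold relVol
  rw [Module.finrank_baseChange]
  congr 1
  refine Finset.sum_congr rfl fun i hi => ?_
  rw [Finset.mem_range] at hi
  refine eq_of_forall_dist_le fun ε hε => ?_
  have hC : 1 < Real.exp (ε / 2) := Real.one_lt_exp_iff.2 (by linarith)
  obtain ⟨b, ho, ho', hmono⟩ := RelVolAux.exists_joint_sorted hN hN' _ hC
  have hr : ∀ M : V → ℝ, IsNAnorm K M → ∀ j, 0 < M (b j) := fun M hM j =>
    RelVolAux.na_pos hM (b.ne_zero j)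
  have h1 := RelVolAux.specVal_diag hC (hr N hN) (hr N' hN') (RelVolAux.diag_base hN ho)
    (RelVolAux.diag_base hN' ho') hmono ⟨i, hi⟩
  have h2 := RelVolAux.specVal_diag hC (hr N hN) (hr N' hN')
    (RelVolAux.diag_ext (L := L) hisom hN (by omega) hC ho)
    (RelVolAux.diag_ext (L := L) hisom hN' (by omega) hC ho') hmono ⟨i, hi⟩
  rw [Real.log_exp] at h1 h2
  rw [Real.dist_eq]
  rw [abs_le] at *
  simp only at h1 h2
  constructor <;> linarith [h1.1, h1.2, h2.1, h2.2]
end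

section
/- Let d ≥ 1, let Γ ⊆ ℕ^{1+d} be an admissible graded subsemigroup, and let Φ : Γ → ℝ be superadditive and linearly bounded, i.e. there is C > 0 with |Φ(m,α)| ≤ C·m on Γ; set θ = limsup_{n→∞} sup_{α ∈ Γ_n} Φ(n,α)/n. For each k ≥ 1, let Φ_k be a superadditive real-valued function on the subsemigroup Γ_{k•} = {(kn,α) ∈ Γ : n ∈ ℕ} such that Φ_k(k,α) = Φ(k,α) for all α ∈ Γ_k and Φ_k(kn,α) ≤ Φ(kn,α) for all (kn,α) ∈ Γ_{k•}. For t ∈ ℝ let Λ_k(t) = {(n,α) ∈ ℕ^{1+d} : (kn,α) ∈ Γ and Φ_k(kn,α) ≥ k·n·t} be the regraded superlevel semigroup. Then for every real t < θ, k^{-d}·vol(Δ(Λ_k(t))) converges to vol(Δ(Γ^{Φ,≥t})) as k → ∞. -/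
open scoped BigOperators
open Filter MeasureTheory

/-- Points of `ℕ^{1+d}`, written as a degree together with a vector in `ℕ^d`. -/
abbrev NPt (d : ℕ) := ℕ × (Fin d → ℕ)

/-- A subset of `ℕ^{1+d}` is a (graded) subsemigroup if it is closed under addition. -/
def IsGradedSubsemigroup {d : ℕ} (Γ : Set (NPt d)) : Prop :=
  ∀ x ∈ Γ, ∀ y ∈ Γ, x + y ∈ Γ

/-- Linear growth: there is `C > 0` with `|α|₁ ≤ C·m` for all `(m, α) ∈ Γ`. -/
def HasLinearGrowth {d : ℕ} (Γ : Set (NPt d)) : Prop :=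
  ∃ C : ℝ, 0 < C ∧ ∀ p ∈ Γ, (∑ i, (p.2 i : ℝ)) ≤ C * p.1

/-- The canonical embedding `ℕ^{1+d} → ℤ^{1+d}`. -/
def nptToInt {d : ℕ} (p : NPt d) : ℤ × (Fin d → ℤ) :=
  ((p.1 : ℤ), fun i => (p.2 i : ℤ))

/-- `Γ` generates `ℤ^{1+d}` as a group. -/
def GeneratesFullLattice {d : ℕ} (Γ : Set (NPt d)) : Prop :=
  AddSubgroup.closure (nptToInt '' Γ) = ⊤

/-- An admissible graded subsemigroup of `ℕ^{1+d}`. -/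
def IsAdmissible {d : ℕ} (Γ : Set (NPt d)) : Prop :=
  IsGradedSubsemigroup Γ ∧ HasLinearGrowth Γ ∧ GeneratesFullLattice Γ

/-- The canonical embedding `ℕ^{1+d} → ℝ^{1+d}`. -/
def nptToReal {d : ℕ} (p : NPt d) : ℝ × (Fin d → ℝ) :=
  ((p.1 : ℝ), fun i => (p.2 i : ℝ))

/-- The convex cone generated by a subset `S` of a real vector space: the set of finite
nonnegative linear combinations of elements of `S`. -/
def coneGen {E : Type*} [AddCommMonoid E] [Module ℝ E] (S : Set E) : Set E :=
  {y | ∃ (n : ℕ) (c : Fin n → ℝ) (p : Fin n → E),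
    (∀ i, 0 ≤ c i) ∧ (∀ i, p i ∈ S) ∧ y = ∑ i, c i • p i}

/-- The Okounkov body of a subset `Σ ⊆ ℕ^{1+d}`: the slice at height `1` of the closed convex
cone generated by `Σ` in `ℝ^{1+d}`. -/
def okounkovBody {d : ℕ} (S : Set (NPt d)) : Set (Fin d → ℝ) :=
  {x | ((1 : ℝ), x) ∈ closure (coneGen (nptToReal '' S))}

/-- The graded piece `Γ_m` of `Γ ⊆ ℕ^{1+d}`. -/
def gradedPiece {d : ℕ} (Γ : Set (NPt d)) (m : ℕ) : Set (Fin d → ℕ) :=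
  {α | (m, α) ∈ Γ}

/-- The superlevel semigroup `Γ^{Φ,≥t}` of a function `Φ` on `Γ`. -/
def superlevel {d : ℕ} (Γ : Set (NPt d)) (Φ : NPt d → ℝ) (t : ℝ) : Set (NPt d) :=
  {p ∈ Γ | p.1 * t ≤ Φ p}

/-- `θ = limsup_{n → ∞} sup_{α ∈ Γ_n} Φ(n,α)/n`. -/
noncomputable def thetaSup {d : ℕ} (Γ : Set (NPt d)) (Φ : NPt d → ℝ) : ℝ :=
  Filter.limsup (fun n : ℕ => sSup {r | ∃ α, (n, α) ∈ Γ ∧ r = Φ (n, α) / n}) Filter.atTop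


/-- The regraded superlevel semigroup `Λ_k(t) = {(n,α) : (kn,α) ∈ Γ, Φ_k(kn,α) ≥ k·n·t}`. -/
def regradedSuperlevel {d : ℕ} (Γ : Set (NPt d)) (Φk : NPt d → ℝ) (k : ℕ) (t : ℝ) :
    Set (NPt d) :=
  {p | (k * p.1, p.2) ∈ Γ ∧ (k : ℝ) * p.1 * t ≤ Φk (k * p.1, p.2)}

/-- Nonempty sets closed under addition and nonnegative scaling. -/
structure IsConeSet {E : Type*} [AddCommMonoid E] [Module ℝ E] (K : Set E) : Prop where
  zero : (0 : E) ∈ K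
  add : ∀ x ∈ K, ∀ y ∈ K, x + y ∈ K
  smul : ∀ c : ℝ, 0 ≤ c → ∀ x ∈ K, c • x ∈ K

lemma coneGen_isCone {E : Type*} [AddCommMonoid E] [Module ℝ E] (S : Set E) :
    IsConeSet (coneGen S) := by
  refine ⟨⟨0, Fin.elim0, Fin.elim0, fun i => i.elim0, fun i => i.elim0, by simp⟩, ?_, ?_⟩
  · rintro _ ⟨n, c, p, hc, hp, rfl⟩ _ ⟨n', c', p', hc', hp', rfl⟩
    refine ⟨n + n', Fin.append c c', Fin.append p p', ?_, ?_, ?_⟩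
    · intro i
      refine Fin.addCases (fun i => ?_) (fun i => ?_) i
      · simpa using hc i
      · simpa using hc' i
    · intro i
      refine Fin.addCases (fun i => ?_) (fun i => ?_) i
      · simpa using hp i
      · simpa using hp' i
    · simp [Fin.sum_univ_add]
  · rintro a ha _ ⟨n, c, p, hc, hp, rfl⟩
    exact ⟨n, fun i => a * c i, p, fun i => mul_nonneg ha (hc i), hp, by
      simp [Finset.smul_sum, mul_smul]⟩

lemma subset_coneGen {E : Type*} [AddCommMonoid E] [Module ℝ E] (S : Set E) :
    S ⊆ coneGen S := fun x hx =>
  ⟨1, fun _ => 1, fun _ => x, fun _ => zero_le_one, fun _ => hx, by simp⟩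

lemma coneGen_subset {E : Type*} [AddCommMonoid E] [Module ℝ E] {S K : Set E}
    (hK : IsConeSet K) (h : S ⊆ K) : coneGen S ⊆ K := by
  rintro _ ⟨n, c, p, hc, hp, rfl⟩
  refine Finset.sum_induction _ (· ∈ K) (fun a b ha hb => hK.add a ha b hb) hK.zero ?_
  intro i _
  exact hK.smul _ (hc i) _ (h (hp i))

abbrev RPt (d : ℕ) := ℝ × (Fin d → ℝ)

lemma IsConeSet.closure {d : ℕ} {K : Set (RPt d)} (h : IsConeSet K) : IsConeSet (closure K) := by
  refine ⟨subset_closure h.zero, ?_, ?_⟩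
  · intro x hx y hy
    exact map_mem_closure₂ continuous_add hx hy h.add
  · intro c hc x hx
    exact map_mem_closure (continuous_const_smul c) hx (fun y hy => h.smul c hc y hy)

/-- The closed cone of `S`. -/
def ccone {d : ℕ} (S : Set (NPt d)) : Set (RPt d) := closure (coneGen (nptToReal '' S))

lemma ccone_isCone {d : ℕ} (S : Set (NPt d)) : IsConeSet (ccone S) := (coneGen_isCone _).closure

lemma mem_ccone {d : ℕ} {S : Set (NPt d)} {p : NPt d} (hp : p ∈ S) : nptToReal p ∈ ccone S :=
  subset_closure (subset_coneGen _ ⟨p, hp, rfl⟩)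

lemma ccone_subset {d : ℕ} {S : Set (NPt d)} {K : Set (RPt d)} (hK : IsConeSet K)
    (hc : IsClosed K) (h : ∀ p ∈ S, nptToReal p ∈ K) : ccone S ⊆ K :=
  closure_minimal (coneGen_subset hK (by rintro _ ⟨p, hp, rfl⟩; exact h p hp)) hc

/-- Lower limit of a sequence of sets. -/
def lowLim {E : Type*} [PseudoMetricSpace E] (D : ℕ → Set E) : Set E :=
  {y | ∀ ε > 0, ∀ᶠ k in atTop, ∃ z ∈ D k, dist z y < ε}

lemma lowLim_closed {E : Type*} [PseudoMetricSpace E] (D : ℕ → Set E) : IsClosed (lowLim D) := by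
  rw [← closure_subset_iff_isClosed]
  intro y hy ε hε
  obtain ⟨y', hy', hd⟩ := Metric.mem_closure_iff.1 hy (ε / 2) (by positivity)
  filter_upwards [hy' (ε / 2) (by positivity)] with k hk
  obtain ⟨z, hz, hzd⟩ := hk
  refine ⟨z, hz, ?_⟩
  have := dist_triangle z y' y
  rw [dist_comm y y'] at hd
  linarith

lemma lowLim_isCone {d : ℕ} (D : ℕ → Set (RPt d)) (hD : ∀ k, IsConeSet (D k)) :
    IsConeSet (lowLim D) := by
  refine ⟨?_, ?_, ?_⟩
  · intro ε hε
    exact Eventually.of_forall fun k => ⟨0, (hD k).zero, by simpa using hε⟩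
  · intro x hx y hy ε hε
    filter_upwards [hx (ε / 2) (by positivity), hy (ε / 2) (by positivity)] with k hk hk'
    obtain ⟨z, hz, hzd⟩ := hk
    obtain ⟨w, hw, hwd⟩ := hk'
    refine ⟨z + w, (hD k).add _ hz _ hw, ?_⟩
    have := dist_add_add_le z w x y
    linarith
  · intro c hc x hx ε hε
    filter_upwards [hx (ε / (c + 1)) (by positivity)] with k hk
    obtain ⟨z, hz, hzd⟩ := hk
    refine ⟨c • z, (hD k).smul _ hc _ hz, ?_⟩
    rw [dist_smul₀, Real.norm_of_nonneg hc]
    rw [lt_div_iff₀ (by positivity)] at hzd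
    have := dist_nonneg (x := z) (y := x)
    nlinarith

/-- Slices of cones at height one. -/
def slice {d : ℕ} (K : Set (RPt d)) : Set (Fin d → ℝ) := {x | ((1 : ℝ), x) ∈ K}

lemma slice_convex {d : ℕ} {K : Set (RPt d)} (hK : IsConeSet K) : Convex ℝ (slice K) := by
  intro x hx y hy a b ha hb hab
  have := hK.add _ (hK.smul a ha _ hx) _ (hK.smul b hb _ hy)
  simpa [slice, hab] using this

lemma slice_closed {d : ℕ} {K : Set (RPt d)} (hK : IsClosed K) : IsClosed (slice K) :=
  hK.preimage (by fun_prop : Continuous fun x : Fin d → ℝ => ((1 : ℝ), x))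

lemma slice_lowLim {d : ℕ} (D : ℕ → Set (RPt d)) (hD : ∀ k, IsConeSet (D k)) :
    slice (lowLim D) ⊆ lowLim (fun k => slice (D k)) := by
  intro x hx ε hε
  have hcont : ContinuousAt (fun y : RPt d => y.1⁻¹ • y.2) ((1 : ℝ), x) := by
    have h1 : ContinuousAt (fun y : RPt d => y.1⁻¹) ((1 : ℝ), x) :=
      continuousAt_fst.inv₀ (by simp)
    have h2 : ContinuousAt (fun y : RPt d => y.2) ((1 : ℝ), x) := continuousAt_snd
    exact h1.smul h2
  have h1 : ∀ᶠ y : RPt d in nhds ((1 : ℝ), x), dist (y.1⁻¹ • y.2) x < ε := by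
    have := hcont.eventually (Metric.ball_mem_nhds _ hε)
    simpa using this
  have h2 : ∀ᶠ y : RPt d in nhds ((1 : ℝ), x), 0 < y.1 :=
    continuousAt_fst.eventually (lt_mem_nhds (by simp))
  obtain ⟨δ, hδ, hball⟩ := Metric.eventually_nhds_iff.1 (h1.and h2)
  filter_upwards [hx δ hδ] with k hk
  obtain ⟨z, hz, hzd⟩ := hk
  obtain ⟨ha, hb⟩ := hball hzd
  refine ⟨z.1⁻¹ • z.2, ?_, ha⟩
  have := (hD k).smul z.1⁻¹ (by positivity) z hz
  have e : z.1⁻¹ • z = ((1 : ℝ), z.1⁻¹ • z.2) := by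
    ext1
    · simp [hb.ne']
    · simp
  rwa [e] at this

lemma eventually_mem_of_interior {d : ℕ} (L : ℕ → Set (Fin d → ℝ)) (hconv : ∀ k, Convex ℝ (L k))
    (hcl : ∀ k, IsClosed (L k)) {y : Fin d → ℝ} (hy : y ∈ interior (lowLim L)) :
    ∀ᶠ k in atTop, y ∈ L k := by
  obtain ⟨r, hr, hball⟩ := Metric.nhds_basis_closedBall.mem_iff.1 (mem_interior_iff_mem_nhds.1 hy)
  let v : (Fin d → Bool) → (Fin d → ℝ) := fun e i => y i + if e i then r else -r
  have hv : ∀ e, v e ∈ lowLim L := by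
    intro e
    apply hball
    rw [Metric.mem_closedBall, dist_pi_le_iff hr.le]
    intro i
    simp only [v, Real.dist_eq]
    split_ifs <;> simp [abs_of_pos hr]
  have hall : ∀ᶠ k in atTop, ∀ e, ∃ z ∈ L k, dist z (v e) < r :=
    eventually_all.2 fun e => hv e r hr
  filter_upwards [hall] with k hk
  by_contra hyk
  obtain ⟨f, u, hf1, hf2⟩ := geometric_hahn_banach_closed_point (hconv k) (hcl k) hyk
  classical
  obtain ⟨z, hz, hzd⟩ := hk (fun i => decide (0 ≤ f (Pi.single i 1)))
  have hlt := (hf1 z hz).trans hf2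
  have hsum : f (z - y) = ∑ i, (z i - y i) * f (Pi.single i 1) := by
    have := LinearMap.pi_apply_eq_sum_univ f.toLinearMap (z - y)
    simp only [ContinuousLinearMap.coe_coe, smul_eq_mul, Pi.sub_apply] at this
    rw [this]
    refine Finset.sum_congr rfl fun i _ => ?_
    congr 2
    ext j
    simp [Pi.single_apply, eq_comm]
  have hnn : 0 ≤ f (z - y) := by
    rw [hsum]
    refine Finset.sum_nonneg fun i _ => ?_
    have hi := (dist_le_pi_dist z _ i).trans_lt hzd
    rw [Real.dist_eq, abs_lt] at hi
    simp only [v] at hi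
    by_cases h : 0 ≤ f (Pi.single i 1)
    · simp only [h, decide_true, if_true] at hi
      exact mul_nonneg (by linarith) h
    · simp only [h, decide_false] at hi
      norm_num at hi
      exact mul_nonneg_of_nonpos_of_nonpos (by linarith) (by linarith)
  rw [map_sub] at hnn
  linarith

lemma nsmul_add_mem {d : ℕ} {T : Set (NPt d)} (hT : IsGradedSubsemigroup T) {p q : NPt d}
    (hp : p ∈ T) (hq : q ∈ T) (j : ℕ) : q + j • p ∈ T := by
  induction j with
  | zero => simpa using hq
  | succ j ih =>
    rw [succ_nsmul, ← add_assoc]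
    exact hT _ ih _ hp

/-- All residue classes of degrees are hit. -/
def HitsResidues {d : ℕ} (T : Set (NPt d)) : Prop :=
  ∀ m : ℕ, 0 < m → ∀ k : ℤ, ∃ q ∈ T, (q.1 : ℤ) ≡ k [ZMOD m]

lemma hitsResidues_of {d : ℕ} {Γ T : Set (NPt d)} (hΓ : GeneratesFullLattice Γ)
    (hT : IsGradedSubsemigroup T) (hne : T.Nonempty)
    (h : ∀ m : ℕ, 0 < m → ∀ γ ∈ Γ, ∃ q ∈ T, (q.1 : ℤ) ≡ γ.1 [ZMOD m]) : HitsResidues T := by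
  intro m hm k
  obtain ⟨p, hp⟩ := hne
  have key : ∀ z : ℤ × (Fin d → ℤ), z ∈ AddSubgroup.closure (nptToInt '' Γ) →
      ∃ q ∈ T, (q.1 : ℤ) ≡ z.1 [ZMOD m] := by
    intro z hz
    induction hz using AddSubgroup.closure_induction with
    | mem x hx =>
      obtain ⟨γ, hγ, rfl⟩ := hx
      exact h m hm γ hγ
    | zero =>
      refine ⟨p + (m - 1) • p, nsmul_add_mem hT hp hp _, ?_⟩
      obtain ⟨m, rfl⟩ : ∃ m', m = m' + 1 := ⟨m - 1, by omega⟩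
      rw [Int.modEq_comm, Int.modEq_iff_dvd]
      refine ⟨p.1, ?_⟩
      simp
      ring
    | add x y _ _ hx hy =>
      obtain ⟨q, hq, hqx⟩ := hx
      obtain ⟨q', hq', hqy⟩ := hy
      exact ⟨q + q', hT _ hq _ hq', by simpa using hqx.add hqy⟩
    | neg x _ hx =>
      obtain ⟨q, hq, hqx⟩ := hx
      obtain ⟨m, rfl⟩ : ∃ m', m = m' + 1 := ⟨m - 1, by omega⟩
      refine ⟨q + (2 * m) • q, nsmul_add_mem hT hq hq _, ?_⟩
      rw [Int.modEq_iff_dvd] at hqx ⊢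
      obtain ⟨c, hc⟩ := hqx
      refine ⟨- c - 2 * q.1, ?_⟩
      simp
      push_cast at hc
      linear_combination -hc
  obtain ⟨q, hq, hqk⟩ := key (k, 0) (by rw [hΓ]; trivial)
  exact ⟨q, hq, hqk⟩

lemma exists_decomp {d : ℕ} {T : Set (NPt d)} (hT : HitsResidues T) (m : ℕ) (hm : 0 < m) :
    ∃ F : Finset (NPt d), ∀ᶠ k in atTop, ∃ q ∈ F, q ∈ T ∧ ∃ j : ℕ, k = q.1 + j * m := by
  classical
  choose q hq hqk using fun r : ℕ => hT m hm r
  refine ⟨(Finset.range m).image q, ?_⟩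
  filter_upwards [eventually_ge_atTop (∑ r ∈ Finset.range m, (q r).1)] with k hk
  have hr : k % m ∈ Finset.range m := Finset.mem_range.2 (Nat.mod_lt _ hm)
  refine ⟨q (k % m), Finset.mem_image_of_mem _ hr, hq _, ?_⟩
  have hle : (q (k % m)).1 ≤ k :=
    (Finset.single_le_sum (f := fun r => (q r).1) (fun _ _ => Nat.zero_le _) hr).trans hk
  have hmod : (q (k % m)).1 ≡ k [MOD m] := by
    have h1 := hqk (k % m)
    rw [Int.natCast_modEq_iff] at h1
    exact h1.trans (Nat.mod_modEq _ _)
  obtain ⟨j, hj⟩ := (Nat.modEq_iff_dvd' hle).1 hmod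
  exact ⟨j, by rw [mul_comm j m, ← hj]; omega⟩

lemma nptToReal_add {d : ℕ} (p q : NPt d) : nptToReal (p + q) = nptToReal p + nptToReal q := by
  ext <;> simp [nptToReal]

lemma nptToReal_nsmul {d : ℕ} (p : NPt d) (j : ℕ) :
    nptToReal (j • p) = (j : ℝ) • nptToReal p := by
  ext <;> simp [nptToReal]

/-- Elements of `T` are limits of scaled elements in degree `k`. -/
lemma mem_lowLim {d : ℕ} {T : Set (NPt d)} (hTs : IsGradedSubsemigroup T) (hT : HitsResidues T)
    (hlin : HasLinearGrowth T) (D : ℕ → Set (RPt d)) (hD : ∀ k, IsConeSet (D k))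
    (hTD : ∀ k : ℕ, 1 ≤ k → ∀ α, (k, α) ∈ T → nptToReal (k, α) ∈ D k) (p : NPt d) (hp : p ∈ T) :
    nptToReal p ∈ lowLim D := by
  rcases Nat.eq_zero_or_pos p.1 with h0 | hm
  · have : nptToReal p = 0 := by
      obtain ⟨C, hC, h⟩ := hlin
      have h1 := h p hp
      rw [h0] at h1
      have h2 : ∀ i, (p.2 i : ℝ) = 0 := by
        intro i
        have := Finset.single_le_sum (f := fun i => (p.2 i : ℝ)) (fun i _ => Nat.cast_nonneg _)
          (Finset.mem_univ i)
        have h3 : (0 : ℝ) ≤ p.2 i := Nat.cast_nonneg _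
        simp at h1 this
        linarith
      ext i
      · simp [nptToReal, h0]
      · simpa [nptToReal] using h2 i
    rw [this]
    exact (lowLim_isCone D hD).zero
  · intro ε hε
    obtain ⟨F, hF⟩ := exists_decomp hT p.1 hm
    have hsmall : ∀ q ∈ F, ∀ᶠ k : ℕ in atTop,
        dist ((k : ℝ)⁻¹ • ((p.1 : ℝ) • nptToReal q - (q.1 : ℝ) • nptToReal p)) 0 < ε := by
      intro q _
      have h1 : Tendsto (fun k : ℕ => (k : ℝ)⁻¹ •
          ((p.1 : ℝ) • nptToReal q - (q.1 : ℝ) • nptToReal p)) atTop (nhds 0) := by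
        have := (tendsto_inv_atTop_nhds_zero_nat (𝕜 := ℝ)).smul_const
          ((p.1 : ℝ) • nptToReal q - (q.1 : ℝ) • nptToReal p)
        simpa using this
      exact (Metric.tendsto_nhds.1 h1) ε hε
    have hsmall' := (Finset.eventually_all F).2 hsmall
    filter_upwards [hF, hsmall', eventually_ge_atTop 1] with k hk hk' hk1
    obtain ⟨q, hqF, hqT, j, hj⟩ := hk
    have hk0 : (k : ℝ) ≠ 0 := by positivity
    have hmem := nsmul_add_mem hTs hp hqT j
    have hdeg : (q + j • p).1 = k := by simp [hj]
    have hmem' : nptToReal (q + j • p) ∈ D k := by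
      have := hTD k hk1 (q + j • p).2
      rw [← hdeg] at this ⊢
      exact this hmem
    refine ⟨((k : ℝ)⁻¹ * p.1) • nptToReal (q + j • p), (hD k).smul _ (by positivity) _ hmem', ?_⟩
    have := hk' q hqF
    rw [← dist_sub_right _ _ (nptToReal p), sub_self]
    convert this using 2
    rw [nptToReal_add, nptToReal_nsmul]
    have hkr : (k : ℝ) = q.1 + j * p.1 := by exact_mod_cast hj
    have e : nptToReal p = ((k : ℝ)⁻¹ * (q.1 + j * p.1)) • nptToReal p := by
      rw [← hkr, inv_mul_cancel₀ hk0, one_smul]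
    nth_rewrite 2 [e]
    module

/-- The abstract convergence statement. -/
lemma tendsto_volume_slice {d : ℕ} {T : Set (NPt d)} (hTs : IsGradedSubsemigroup T)
    (hT : HitsResidues T) (hlin : HasLinearGrowth T) (D : ℕ → Set (RPt d))
    (hD : ∀ k, IsConeSet (D k)) (hDc : ∀ k, IsClosed (D k))
    (hTD : ∀ k : ℕ, 1 ≤ k → ∀ α, (k, α) ∈ T → nptToReal (k, α) ∈ D k)
    (hDT : ∀ k : ℕ, 1 ≤ k → D k ⊆ ccone T) :
    Tendsto (fun k => volume (slice (D k))) atTop (nhds (volume (slice (ccone T)))) ∧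
      volume (slice (ccone T)) ≠ ⊤ := by
  have hclT : IsClosed (slice (ccone T)) := slice_closed isClosed_closure
  have hfin : volume (slice (ccone T)) ≠ ⊤ := by
    obtain ⟨C, hC, h⟩ := hlin
    have hK : IsConeSet {y : RPt d | (∀ i, 0 ≤ y.2 i) ∧ ∑ i, y.2 i ≤ C * y.1} := by
      refine ⟨by simp, ?_, ?_⟩
      · rintro x ⟨hx, hx'⟩ y ⟨hy, hy'⟩
        refine ⟨fun i => add_nonneg (hx i) (hy i), ?_⟩
        simp only [Prod.snd_add, Prod.fst_add, Pi.add_apply, Finset.sum_add_distrib]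
        linarith
      · rintro c hc x ⟨hx, hx'⟩
        refine ⟨fun i => mul_nonneg hc (hx i), ?_⟩
        simp only [Prod.smul_snd, Prod.smul_fst, Pi.smul_apply, smul_eq_mul, ← Finset.mul_sum]
        nlinarith
    have hKc : IsClosed {y : RPt d | (∀ i, 0 ≤ y.2 i) ∧ ∑ i, y.2 i ≤ C * y.1} := by
      have : {y : RPt d | (∀ i, 0 ≤ y.2 i) ∧ ∑ i, y.2 i ≤ C * y.1} =
          (⋂ i, {y : RPt d | 0 ≤ y.2 i}) ∩ {y : RPt d | ∑ i, y.2 i ≤ C * y.1} := by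
        ext; simp
      rw [this]
      refine IsClosed.inter (isClosed_iInter fun i => ?_) ?_
      · exact isClosed_le (by fun_prop) (by fun_prop)
      · exact isClosed_le (by fun_prop) (by fun_prop)
    have hsub := ccone_subset (S := T) hK hKc (fun p hp =>
      ⟨fun i => Nat.cast_nonneg _, h p hp⟩)
    refine ((measure_mono (t := Set.Icc (0 : Fin d → ℝ) (fun _ => C)) ?_).trans_lt
      isCompact_Icc.measure_lt_top).ne
    intro x hx
    obtain ⟨h1, h2⟩ := hsub hx
    refine ⟨h1, fun i => ?_⟩
    have := Finset.single_le_sum (f := fun i => x i) (fun i _ => h1 i) (Finset.mem_univ i)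
    simp only [mul_one] at this h2
    exact this.trans h2
  refine ⟨?_, hfin⟩
  have hsub : slice (ccone T) ⊆ lowLim (fun k => slice (D k)) := by
    refine Set.Subset.trans ?_ (slice_lowLim D hD)
    intro x hx
    exact ccone_subset (lowLim_isCone D hD) (lowLim_closed D)
      (mem_lowLim hTs hT hlin D hD hTD) hx
  have hfr : volume (frontier (slice (ccone T))) = 0 :=
    (slice_convex (ccone_isCone T)).addHaar_frontier volume
  refine tendsto_measure_of_ae_tendsto_indicator atTop hclT.measurableSet
    (fun k => (slice_closed (hDc k)).measurableSet) hclT.measurableSet hfin ?_ ?_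
  · filter_upwards [eventually_ge_atTop 1] with k hk x hx using hDT k hk hx
  · have hae : ∀ᵐ x ∂(volume : Measure (Fin d → ℝ)), x ∉ frontier (slice (ccone T)) :=
      measure_eq_zero_iff_ae_notMem.1 hfr
    filter_upwards [hae] with x hx
    by_cases hxT : x ∈ slice (ccone T)
    · have hxi : x ∈ interior (slice (ccone T)) := by
        by_contra hxi
        exact hx ⟨subset_closure hxT, hxi⟩
      filter_upwards [eventually_mem_of_interior _ (fun k => slice_convex (hD k))
        (fun k => slice_closed (hDc k)) (interior_mono hsub hxi)] with k hk
      exact ⟨fun _ => hxT, fun _ => hk⟩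
    · filter_upwards [eventually_ge_atTop 1] with k hk
      exact ⟨fun h => hDT k hk h, fun h => (hxT h).elim⟩

lemma phi_nsmul {d : ℕ} {Γ : Set (NPt d)} (hΓ : IsGradedSubsemigroup Γ) {Φ : NPt d → ℝ}
    (hsuper : ∀ x ∈ Γ, ∀ y ∈ Γ, Φ x + Φ y ≤ Φ (x + y)) {p q : NPt d} (hp : p ∈ Γ) (hq : q ∈ Γ)
    (j : ℕ) : Φ q + j * Φ p ≤ Φ (q + j • p) := by
  induction j with
  | zero => simp
  | succ j ih =>
    have := hsuper _ (nsmul_add_mem hΓ hp hq j) _ hp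
    rw [succ_nsmul, ← add_assoc]
    push_cast
    linarith

lemma generates_nonempty {d : ℕ} {Γ : Set (NPt d)} (h : GeneratesFullLattice Γ) :
    ∃ p ∈ Γ, 0 < p.1 := by
  by_contra! hcon
  have : AddSubgroup.closure (nptToInt '' Γ) ≤ (AddMonoidHom.fst ℤ (Fin d → ℤ)).ker := by
    rw [AddSubgroup.closure_le]
    rintro _ ⟨p, hp, rfl⟩
    have := Nat.le_zero.1 (hcon p hp)
    rw [SetLike.mem_coe, AddMonoidHom.mem_ker]
    simp [nptToInt, this]
  rw [h] at this
  have := this (AddSubgroup.mem_top ((1 : ℤ), (0 : Fin d → ℤ)))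
  rw [AddMonoidHom.mem_ker] at this
  simp at this

lemma exists_gt_of_lt_theta {d : ℕ} {Γ : Set (NPt d)} (hΓ : IsAdmissible Γ) {Φ : NPt d → ℝ}
    (hbdd : ∃ C : ℝ, 0 < C ∧ ∀ p ∈ Γ, |Φ p| ≤ C * p.1) {t : ℝ} (ht : t < thetaSup Γ Φ) :
    ∃ p ∈ Γ, p.1 * t < Φ p := by
  obtain ⟨hs, -, hg⟩ := hΓ
  obtain ⟨C, hC, hb⟩ := hbdd
  obtain ⟨p, hp, hp0⟩ := generates_nonempty hg
  obtain ⟨F, hF⟩ := exists_decomp (hitsResidues_of hg hs ⟨p, hp⟩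
    (fun m _ γ hγ => ⟨γ, hγ, rfl⟩)) p.1 hp0
  have hne : ∀ᶠ n : ℕ in atTop, ∃ α, (n, α) ∈ Γ := by
    filter_upwards [hF] with n hn
    obtain ⟨q, -, hq, j, hj⟩ := hn
    refine ⟨(q + j • p).2, ?_⟩
    have hdeg : n = (q + j • p).1 := by simp [hj]
    rw [hdeg]
    exact nsmul_add_mem hs hp hq j
  have hbound : ∀ n : ℕ, 1 ≤ n → ∀ α, (n, α) ∈ Γ → |Φ (n, α) / n| ≤ C := by
    intro n hn α hα
    have hn' : (0 : ℝ) < n := by exact_mod_cast hn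
    rw [abs_div, abs_of_pos hn', div_le_iff₀ hn']
    exact hb _ hα
  have hge : ∀ᶠ n : ℕ in atTop, -C ≤ sSup {r | ∃ α, (n, α) ∈ Γ ∧ r = Φ (n, α) / n} := by
    filter_upwards [hne, eventually_ge_atTop 1] with n hn hn1
    obtain ⟨α, hα⟩ := hn
    refine (abs_le.1 (hbound n hn1 α hα)).1.trans (le_csSup ⟨C, ?_⟩ ⟨α, hα, rfl⟩)
    rintro _ ⟨β, hβ, rfl⟩
    exact (abs_le.1 (hbound n hn1 β hβ)).2
  have hcob : IsCoboundedUnder (· ≤ ·) atTop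
      (fun n : ℕ => sSup {r | ∃ α, (n, α) ∈ Γ ∧ r = Φ (n, α) / n}) :=
    IsBoundedUnder.isCoboundedUnder_le ⟨-C, by simpa using hge⟩
  have hfreq := frequently_lt_of_lt_limsup hcob ht
  obtain ⟨n, hlt, ⟨α, hα⟩, hn1⟩ := (hfreq.and_eventually (hne.and (eventually_ge_atTop 1))).exists
  obtain ⟨_, ⟨β, hβ, rfl⟩, hlt'⟩ := exists_lt_of_lt_csSup (by exact ⟨_, α, hα, rfl⟩) hlt
  have hn' : (0 : ℝ) < n := by exact_mod_cast hn1
  refine ⟨_, hβ, ?_⟩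
  rw [lt_div_iff₀ hn'] at hlt'
  simpa [mul_comm] using hlt'

lemma superlevel_semigroup {d : ℕ} {Γ : Set (NPt d)} (hΓ : IsGradedSubsemigroup Γ) {Φ : NPt d → ℝ}
    (hsuper : ∀ x ∈ Γ, ∀ y ∈ Γ, Φ x + Φ y ≤ Φ (x + y)) (t : ℝ) :
    IsGradedSubsemigroup (superlevel Γ Φ t) := by
  rintro x ⟨hx, hx'⟩ y ⟨hy, hy'⟩
  refine ⟨hΓ _ hx _ hy, ?_⟩
  have := hsuper x hx y hy
  simp only [Prod.fst_add, Nat.cast_add]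
  linarith

lemma superlevel_hits {d : ℕ} {Γ : Set (NPt d)} (hΓ : IsAdmissible Γ) {Φ : NPt d → ℝ}
    (hsuper : ∀ x ∈ Γ, ∀ y ∈ Γ, Φ x + Φ y ≤ Φ (x + y))
    (hbdd : ∃ C : ℝ, 0 < C ∧ ∀ p ∈ Γ, |Φ p| ≤ C * p.1) {t : ℝ} (ht : t < thetaSup Γ Φ) :
    HitsResidues (superlevel Γ Φ t) := by
  obtain ⟨p, hp, hpt⟩ := exists_gt_of_lt_theta hΓ hbdd ht
  refine hitsResidues_of hΓ.2.2 (superlevel_semigroup hΓ.1 hsuper t) ⟨p, hp, hpt.le⟩ ?_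
  intro m hm γ hγ
  obtain ⟨N, hN⟩ := exists_nat_ge ((γ.1 * t - Φ γ) / (Φ p - p.1 * t))
  rw [div_le_iff₀ (by linarith)] at hN
  refine ⟨γ + (m * N) • p, ⟨nsmul_add_mem hΓ.1 hp hγ _, ?_⟩, ?_⟩
  · have h1 := phi_nsmul hΓ.1 hsuper hp hγ (m * N)
    have hm' : (1 : ℝ) ≤ m := by exact_mod_cast hm
    have h2 : (N : ℝ) * (Φ p - p.1 * t) ≤ m * (N * (Φ p - p.1 * t)) :=
      le_mul_of_one_le_left (mul_nonneg (Nat.cast_nonneg _) (by linarith)) hm'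
    simp only [Prod.fst_add, Prod.smul_fst, smul_eq_mul]
    push_cast at h1 ⊢
    nlinarith
  · rw [Int.modEq_comm, Int.modEq_iff_dvd]
    refine ⟨N * p.1, ?_⟩
    simp
    ring

/-- Approximation of superlevel Okounkov bodies: if `Φ_k` is superadditive on
`Γ_{k•} = {(kn,α) ∈ Γ}`, agrees with `Φ` in degree `k` and is dominated by `Φ` on `Γ_{k•}`,
then for every `t < θ`, `k^{-d}·vol(Δ(Λ_k(t))) → vol(Δ(Γ^{Φ,≥t}))` as `k → ∞`. -/
theorem vol_regradedSuperlevel_tendsto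
    (d : ℕ) (hd : 1 ≤ d) (Γ : Set (NPt d)) (hΓ : IsAdmissible Γ)
    (Φ : NPt d → ℝ)
    (hsuper : ∀ x ∈ Γ, ∀ y ∈ Γ, Φ x + Φ y ≤ Φ (x + y))
    (hbdd : ∃ C : ℝ, 0 < C ∧ ∀ p ∈ Γ, |Φ p| ≤ C * p.1)
    (Φk : ℕ → NPt d → ℝ)
    (hΦksuper : ∀ k, 1 ≤ k → ∀ x ∈ Γ, ∀ y ∈ Γ, k ∣ x.1 → k ∣ y.1 →
      Φk k x + Φk k y ≤ Φk k (x + y))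
    (hΦkeq : ∀ k, 1 ≤ k → ∀ α : Fin d → ℕ, (k, α) ∈ Γ → Φk k (k, α) = Φ (k, α))
    (hΦkle : ∀ k, 1 ≤ k → ∀ x ∈ Γ, k ∣ x.1 → Φk k x ≤ Φ x) :
    ∀ t : ℝ, t < thetaSup Γ Φ →
      Filter.Tendsto
        (fun k : ℕ => ((k : ℝ) ^ d)⁻¹ *
          (volume (okounkovBody (regradedSuperlevel Γ (Φk k) k t))).toReal)
        Filter.atTop
        (nhds ((volume (okounkovBody (superlevel Γ Φ t))).toReal)) := by
  intro t ht
  set T := superlevel Γ Φ t with hTdef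
  have hTs : IsGradedSubsemigroup T := superlevel_semigroup hΓ.1 hsuper t
  have hTh : HitsResidues T := superlevel_hits hΓ hsuper hbdd ht
  have hTl : HasLinearGrowth T := by
    obtain ⟨C, hC, h⟩ := hΓ.2.1
    exact ⟨C, hC, fun p hp => h p hp.1⟩
  let D : ℕ → Set (RPt d) := fun k =>
    {y | (y.1, (k : ℝ) • y.2) ∈ ccone (regradedSuperlevel Γ (Φk k) k t)}
  have hD : ∀ k, IsConeSet (D k) := by
    intro k
    have hc := ccone_isCone (regradedSuperlevel Γ (Φk k) k t)
    refine ⟨?_, ?_, ?_⟩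
    · have := hc.zero
      simpa [D, ← Prod.zero_eq_mk] using this
    · intro x hx y hy
      have := hc.add _ hx _ hy
      simpa [D] using this
    · intro c hc' x hx
      have := hc.smul c hc' _ hx
      simpa [D, smul_comm c (k : ℝ)] using this
  have hDc : ∀ k, IsClosed (D k) := by
    intro k
    exact IsClosed.preimage (f := fun y : RPt d => (y.1, (k : ℝ) • y.2)) (by fun_prop)
      isClosed_closure
  have hTD : ∀ k : ℕ, 1 ≤ k → ∀ α, (k, α) ∈ T → nptToReal (k, α) ∈ D k := by
    rintro k hk α ⟨hα, hα'⟩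
    have hmem : ((1 : ℕ), α) ∈ regradedSuperlevel Γ (Φk k) k t := by
      refine ⟨by simpa using hα, ?_⟩
      simpa [hΦkeq k hk α hα] using hα'
    have := (ccone_isCone _).smul k (Nat.cast_nonneg k) _ (mem_ccone hmem)
    simpa [D, nptToReal] using this
  have hDT : ∀ k : ℕ, 1 ≤ k → D k ⊆ ccone T := by
    intro k hk y hy
    have hk0 : (k : ℝ) ≠ 0 := by positivity
    have hcT := ccone_isCone T
    have hsub : ccone (regradedSuperlevel Γ (Φk k) k t) ⊆
        {y : RPt d | (y.1, (k : ℝ)⁻¹ • y.2) ∈ ccone T} := by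
      apply ccone_subset
      · refine ⟨?_, ?_, ?_⟩
        · have := hcT.zero
          simpa [← Prod.zero_eq_mk] using this
        · intro x hx y hy
          have := hcT.add _ hx _ hy
          simpa using this
        · intro c hc' x hx
          have := hcT.smul c hc' _ hx
          simpa [smul_comm c (k : ℝ)⁻¹] using this
      · exact IsClosed.preimage (f := fun y : RPt d => (y.1, (k : ℝ)⁻¹ • y.2)) (by fun_prop)
          isClosed_closure
      · rintro ⟨n, α⟩ ⟨h1, h2⟩
        have hmem : (k * n, α) ∈ T := by
          refine ⟨h1, ?_⟩
          have := hΦkle k hk _ h1 (Dvd.intro _ rfl)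
          push_cast
          exact h2.trans this
        have := hcT.smul (k : ℝ)⁻¹ (by positivity) _ (mem_ccone hmem)
        simpa [nptToReal, hk0] using this
    have := hsub hy
    simpa [smul_smul, hk0] using this
  obtain ⟨hlim, hfin⟩ := tendsto_volume_slice hTs hTh hTl D hD hDc hTD hDT
  have hlim' := (ENNReal.tendsto_toReal hfin).comp hlim
  refine hlim'.congr' ?_
  filter_upwards [eventually_ge_atTop 1] with k hk
  have hk0 : (k : ℝ) ≠ 0 := by positivity
  have hpre : slice (D k) =
      (fun x => (k : ℝ) • x) ⁻¹' okounkovBody (regradedSuperlevel Γ (Φk k) k t) := rfl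
  simp only [Function.comp_apply]
  rw [hpre, Measure.addHaar_preimage_smul volume hk0, ENNReal.toReal_mul,
    ENNReal.toReal_ofReal (abs_nonneg _), abs_of_nonneg (by positivity)]
  simp
end
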